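/- (Convolution, dependent case.) Let θ > 0 and let p, q > 1 with 1/p + 1/q = 1. Let U₁ and U₂ be service processes on a common probability space (not assumed independent), with U₁ MGF-bounded for pθ with bounding functions (ρ₁, σ₁) and U₂ MGF-bounded for qθ with bounding functions (ρ₂, σ₂), and assume ρ₁(pθ) ≠ ρ₂(qθ). Then the min-plus convolution U₁ ⊗ U₂, defined by (U₁ ⊗ U₂)(s,t) := min_{s≤r≤t} (U₁(s,r) + U₂(r,t)), is MGF-bounded for θ with bounding functions ρ(θ) = max(ρ₁(pθ), ρ₂(qθ)) and σ(θ) = σ₁(pθ) + σ₂(qθ) − (1/θ)·log(1 − e^{−θ|ρ₁(pθ) − ρ₂(qθ)|}). -/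

import Mathlib

open MeasureTheory ProbabilityTheory

/-!
The minimum defining `(U₁ ⊗ U₂)(s, t)` is attained, so `E e^{-θ (U₁ ⊗ U₂)(s, t)}` is at most the sum
over `s ≤ r ≤ t` of `E e^{-θ (U₁(s, r) + U₂(r, t))}`. Hölder's inequality with exponents `p, q`
bounds each summand by `e^{θ (ρ₁ (r - s) + ρ₂ (t - r) + σ₁ + σ₂)}` without any independence.
With `n = t - s`, `x = e^{θ ρ₁}` and `y = e^{θ ρ₂}`, what remains is the two-variable geometric sum
`∑ xⁱ yⁿ⁻ⁱ = (xⁿ⁺¹ - yⁿ⁺¹) / (x - y)`, which is at most `(max x y)ⁿ / (1 - min x y / max x y)`; its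
denominator is the logarithmic term of `σ`.
-/

section GeomSum

lemma geom_sum₂_le_of_ne {K : Type*} [Field K] [LinearOrder K] [IsStrictOrderedRing K] {x y : K}
    (hx : 0 ≤ x) (hy : 0 ≤ y) (hxy : x ≠ y) (n : ℕ) :
    ∑ i ∈ Finset.range (n + 1), x ^ i * y ^ (n - i) ≤ max x y ^ n * (1 - min x y / max x y)⁻¹ := by
  wlog hlt : x < y generalizing x y
  · rw [max_comm, min_comm]
    exact (geom_sum₂_comm x y (n + 1)).trans_le
      (this hy hx hxy.symm (hxy.lt_or_gt.resolve_left hlt))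
  have hy₀ : 0 < y := hx.trans_lt hlt
  have sum_mul : (∑ i ∈ Finset.range (n + 1), x ^ i * y ^ (n - i)) * (y - x)
      = y ^ (n + 1) - x ^ (n + 1) := geom_sum₂_mul_of_le hlt.le (n + 1)
  rw [max_eq_right hlt.le, min_eq_left hlt.le, one_sub_div hy₀.ne', inv_div, ← mul_div_assoc,
    ← pow_succ, le_div_iff₀ (sub_pos.mpr hlt), sum_mul]
  exact sub_le_self _ (pow_nonneg hx _)

lemma sum_Icc_exp_le {a b : ℝ} (hab : a ≠ b) {s t : ℕ} (hst : s ≤ t) :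
    ∑ r ∈ Finset.Icc s t, Real.exp (a * ((r : ℝ) - s) + b * ((t : ℝ) - r))
      ≤ Real.exp (max a b * ((t : ℝ) - s)) * (1 - Real.exp (-|a - b|))⁻¹ := by
  obtain ⟨n, rfl⟩ := Nat.exists_eq_add_of_le hst
  calc ∑ r ∈ Finset.Icc s (s + n), Real.exp (a * ((r : ℝ) - s) + b * (((s + n : ℕ) : ℝ) - r))
      = ∑ i ∈ Finset.range (n + 1), Real.exp a ^ i * Real.exp b ^ (n - i) := by
        rw [← Finset.Ico_add_one_right_eq_Icc, Finset.sum_Ico_eq_sum_range, add_assoc,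
          Nat.add_sub_cancel_left]
        refine Finset.sum_congr rfl fun i hi => ?_
        rw [← Real.exp_nat_mul, ← Real.exp_nat_mul, ← Real.exp_add,
          Nat.cast_sub (Finset.mem_range_succ_iff.mp hi)]
        push_cast
        ring_nf
    _ ≤ max (Real.exp a) (Real.exp b) ^ n
          * (1 - min (Real.exp a) (Real.exp b) / max (Real.exp a) (Real.exp b))⁻¹ :=
        geom_sum₂_le_of_ne (Real.exp_nonneg a) (Real.exp_nonneg b)
          (Real.exp_injective.ne hab) n
    _ = Real.exp (max a b * (((s + n : ℕ) : ℝ) - s)) * (1 - Real.exp (-|a - b|))⁻¹ := by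
        rw [← Real.exp_monotone.map_max, ← Real.exp_monotone.map_min, ← Real.exp_sub,
          ← Real.exp_nat_mul, ← max_sub_min_eq_abs', neg_sub]
        push_cast
        ring_nf

end GeomSum

lemma apply_csInf_image_le_sum {ι α M : Type*} [ConditionallyCompleteLinearOrder α]
    [AddCommMonoid M] [PartialOrder M] [CanonicallyOrderedAdd M] (g : α → M) (f : ι → α)
    {S : Finset ι} (hS : S.Nonempty) : g (sInf (f '' S)) ≤ ∑ i ∈ S, g (f i) := by
  obtain ⟨i, hi, hfi⟩ := (hS.to_set.image f).csInf_mem (S.finite_toSet.image f)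
  rw [← hfi]
  exact Finset.single_le_sum_of_canonicallyOrdered (f := fun i => g (f i)) hi

section Holder

variable {Ω : Type*} [MeasurableSpace Ω] {P : Measure Ω}

lemma ofReal_exp_rpow (x c : ℝ) :
    ENNReal.ofReal (Real.exp x) ^ c = ENNReal.ofReal (Real.exp (x * c)) := by
  rw [ENNReal.ofReal_rpow_of_pos (Real.exp_pos x), ← Real.exp_mul]

lemma ofReal_exp_add (x y : ℝ) :
    ENNReal.ofReal (Real.exp (x + y))
      = ENNReal.ofReal (Real.exp x) * ENNReal.ofReal (Real.exp y) := by
  rw [Real.exp_add, ENNReal.ofReal_mul (Real.exp_nonneg x)]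

lemma lintegral_exp_add_le_rpow_mul_rpow {p q : ℝ} (hpq : p.HolderConjugate q) {X Y : Ω → ℝ}
    (hX : AEMeasurable X P) (hY : AEMeasurable Y P) :
    ∫⁻ ω, ENNReal.ofReal (Real.exp (X ω + Y ω)) ∂P
      ≤ (∫⁻ ω, ENNReal.ofReal (Real.exp (p * X ω)) ∂P) ^ p⁻¹
        * (∫⁻ ω, ENNReal.ofReal (Real.exp (q * Y ω)) ∂P) ^ q⁻¹ := by
  refine le_of_eq_of_le (lintegral_congr fun ω => ?_) (ENNReal.lintegral_mul_norm_pow_le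
    (by fun_prop) (by fun_prop) hpq.inv_nonneg hpq.symm.inv_nonneg hpq.inv_add_inv_eq_one)
  rw [ofReal_exp_rpow, ofReal_exp_rpow, mul_comm p, mul_comm q, mul_inv_cancel_right₀ hpq.ne_zero,
    mul_inv_cancel_right₀ hpq.symm.ne_zero, ofReal_exp_add]

end Holder

section MinPlus

variable {Ω : Type*}

/-- The min-plus convolution `U₁ ⊗ U₂` of bivariate processes. The minimum over `s ≤ r ≤ t` is
written as an infimum in `ℝ`, hence has the junk value `0` when `t < s`. -/
noncomputable def minPlusConv (U₁ U₂ : ℕ → ℕ → Ω → ℝ) (s t : ℕ) (ω : Ω) : ℝ :=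
  sInf ((fun r => U₁ s r ω + U₂ r t ω) '' Set.Icc s t)

variable [MeasurableSpace Ω]

/-- The process `U` is MGF-bounded for `θ` under `P`. The arguments `ρ` and `σ` are the values
`ρ(θ)` and `σ(θ)` of the bounding functions; with `∫⁻`, the bound forces the
expectation to be finite. -/
def HasMGFBound (U : ℕ → ℕ → Ω → ℝ) (θ ρ σ : ℝ) (P : Measure Ω) : Prop :=
  ∀ s t, s ≤ t → ∫⁻ ω, ENNReal.ofReal (Real.exp (-θ * U s t ω)) ∂P
    ≤ ENNReal.ofReal (Real.exp (θ * ρ * ((t : ℝ) - (s : ℝ)) + θ * σ))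

variable {P : Measure Ω} {U₁ U₂ : ℕ → ℕ → Ω → ℝ}

lemma lintegral_comp_minPlusConv_le_sum {g : ℝ → ENNReal} (hg : Measurable g)
    (hU₁ : ∀ s t, s ≤ t → AEMeasurable (U₁ s t) P) (hU₂ : ∀ s t, s ≤ t → AEMeasurable (U₂ s t) P)
    {s t : ℕ} (hst : s ≤ t) :
    ∫⁻ ω, g (minPlusConv U₁ U₂ s t ω) ∂P
      ≤ ∑ r ∈ Finset.Icc s t, ∫⁻ ω, g (U₁ s r ω + U₂ r t ω) ∂P := by
  rw [← lintegral_finsetSum' _ fun r hr => ?_]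
  · refine lintegral_mono fun ω => ?_
    rw [minPlusConv, ← Finset.coe_Icc]
    exact apply_csInf_image_le_sum g _ (Finset.nonempty_Icc.mpr hst)
  · obtain ⟨hsr, hrt⟩ := Finset.mem_Icc.mp hr
    exact hg.comp_aemeasurable ((hU₁ s r hsr).add (hU₂ r t hrt))

lemma HasMGFBound.lintegral_exp_add_le {θ p q ρ₁ σ₁ ρ₂ σ₂ : ℝ} (hpq : p.HolderConjugate q)
    (h₁ : HasMGFBound U₁ (p * θ) ρ₁ σ₁ P) (h₂ : HasMGFBound U₂ (q * θ) ρ₂ σ₂ P) {s r t : ℕ}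
    (hsr : s ≤ r) (hrt : r ≤ t) (hU₁ : AEMeasurable (U₁ s r) P) (hU₂ : AEMeasurable (U₂ r t) P) :
    ∫⁻ ω, ENNReal.ofReal (Real.exp (-θ * (U₁ s r ω + U₂ r t ω))) ∂P
      ≤ ENNReal.ofReal (Real.exp (θ * ρ₁ * ((r : ℝ) - s) + θ * ρ₂ * ((t : ℝ) - r)
          + θ * (σ₁ + σ₂))) := by
  have hp := hpq.pos
  have hq := hpq.symm.pos
  calc ∫⁻ ω, ENNReal.ofReal (Real.exp (-θ * (U₁ s r ω + U₂ r t ω))) ∂P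
      ≤ (∫⁻ ω, ENNReal.ofReal (Real.exp (-(p * θ) * U₁ s r ω)) ∂P) ^ p⁻¹
          * (∫⁻ ω, ENNReal.ofReal (Real.exp (-(q * θ) * U₂ r t ω)) ∂P) ^ q⁻¹ := by
        simpa only [mul_add, mul_assoc, neg_mul, mul_neg] using
          lintegral_exp_add_le_rpow_mul_rpow hpq (hU₁.const_mul (-θ)) (hU₂.const_mul (-θ))
    _ ≤ ENNReal.ofReal (Real.exp (p * θ * ρ₁ * ((r : ℝ) - s) + p * θ * σ₁)) ^ p⁻¹
          * ENNReal.ofReal (Real.exp (q * θ * ρ₂ * ((t : ℝ) - r) + q * θ * σ₂)) ^ q⁻¹ := by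
        gcongr
        exacts [h₁ s r hsr, h₂ r t hrt]
    _ = ENNReal.ofReal (Real.exp (θ * ρ₁ * ((r : ℝ) - s) + θ * ρ₂ * ((t : ℝ) - r)
          + θ * (σ₁ + σ₂))) := by
        rw [ofReal_exp_rpow, ofReal_exp_rpow, ← ofReal_exp_add]
        congr 2
        field

theorem convolution_dependent_general {θ p q ρ₁ σ₁ ρ₂ σ₂ : ℝ} (hθ : 0 < θ)
    (hpq : p.HolderConjugate q) (hU₁ : ∀ s t, s ≤ t → AEMeasurable (U₁ s t) P)
    (hU₂ : ∀ s t, s ≤ t → AEMeasurable (U₂ s t) P) (h₁ : HasMGFBound U₁ (p * θ) ρ₁ σ₁ P)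
    (h₂ : HasMGFBound U₂ (q * θ) ρ₂ σ₂ P) (hne : ρ₁ ≠ ρ₂) :
    HasMGFBound (minPlusConv U₁ U₂) θ (max ρ₁ ρ₂)
      (σ₁ + σ₂ - 1 / θ * Real.log (1 - Real.exp (-θ * |ρ₁ - ρ₂|))) P := by
  intro s t hst
  have gap_pos : 0 < 1 - Real.exp (-θ * |ρ₁ - ρ₂|) :=
    sub_pos.mpr (Real.exp_lt_one_iff.mpr (mul_neg_of_neg_of_pos (neg_lt_zero.mpr hθ)
      (abs_sub_pos.mpr hne)))
  have sum_le := sum_Icc_exp_le ((mul_right_injective₀ hθ.ne').ne hne) hst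
  rw [← mul_max_of_nonneg _ _ hθ.le, ← mul_sub, abs_mul, abs_of_pos hθ, ← neg_mul] at sum_le
  calc ∫⁻ ω, ENNReal.ofReal (Real.exp (-θ * minPlusConv U₁ U₂ s t ω)) ∂P
      ≤ ∑ r ∈ Finset.Icc s t,
          ∫⁻ ω, ENNReal.ofReal (Real.exp (-θ * (U₁ s r ω + U₂ r t ω))) ∂P :=
        lintegral_comp_minPlusConv_le_sum
          (g := fun x => ENNReal.ofReal (Real.exp (-θ * x))) (by fun_prop) hU₁ hU₂ hst
    _ ≤ ∑ r ∈ Finset.Icc s t, ENNReal.ofReal (Real.exp (θ * ρ₁ * ((r : ℝ) - s)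
          + θ * ρ₂ * ((t : ℝ) - r) + θ * (σ₁ + σ₂))) := by
        refine Finset.sum_le_sum fun r hr => ?_
        obtain ⟨hsr, hrt⟩ := Finset.mem_Icc.mp hr
        exact h₁.lintegral_exp_add_le hpq h₂ hsr hrt (hU₁ s r hsr) (hU₂ r t hrt)
    _ = ENNReal.ofReal ((∑ r ∈ Finset.Icc s t, Real.exp (θ * ρ₁ * ((r : ℝ) - s)
          + θ * ρ₂ * ((t : ℝ) - r))) * Real.exp (θ * (σ₁ + σ₂))) := by
        simp_rw [Finset.sum_mul, ← Real.exp_add]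
        exact (ENNReal.ofReal_sum_of_nonneg fun r _ => Real.exp_nonneg _).symm
    _ ≤ ENNReal.ofReal (Real.exp (θ * max ρ₁ ρ₂ * ((t : ℝ) - s))
          * (1 - Real.exp (-θ * |ρ₁ - ρ₂|))⁻¹ * Real.exp (θ * (σ₁ + σ₂))) := by
        gcongr
    _ = ENNReal.ofReal (Real.exp (θ * max ρ₁ ρ₂ * ((t : ℝ) - s)
          + θ * (σ₁ + σ₂ - 1 / θ * Real.log (1 - Real.exp (-θ * |ρ₁ - ρ₂|))))) := by
        rw [← Real.exp_log (inv_pos.mpr gap_pos), Real.log_inv, ← Real.exp_add, ← Real.exp_add]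
        congr 2
        field

end MinPlus

/-- Convolution, dependent case: with Hölder parameters `p, q`,
if `U₁` is MGF-bounded for `pθ` with values `(ρ₁, σ₁) = (ρ₁(pθ), σ₁(pθ))` and
`U₂` is MGF-bounded for `qθ` with values `(ρ₂, σ₂) = (ρ₂(qθ), σ₂(qθ))`, and `ρ₁ ≠ ρ₂`,
then `U₁ ⊗ U₂` is MGF-bounded for `θ` with `ρ = max(ρ₁, ρ₂)` and
`σ = σ₁ + σ₂ − (1/θ)·log(1 − e^{−θ|ρ₁ − ρ₂|})`. -/
theorem convolution_dependent
    {Ω : Type*} [MeasurableSpace Ω] (P : Measure Ω) [IsProbabilityMeasure P]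
    (θ : ℝ) (hθ : 0 < θ)
    (p q : ℝ) (hp : 1 < p) (hq : 1 < q) (hpq : 1 / p + 1 / q = 1)
    (U₁ U₂ : ℕ → ℕ → Ω → ℝ)
    (ρ₁ σ₁ ρ₂ σ₂ : ℝ)
    -- U₁ and U₂ are service processes
    (hU₁meas : ∀ s t, Measurable (U₁ s t))
    (hU₁nonneg : ∀ s t, s ≤ t → ∀ ω, 0 ≤ U₁ s t ω)
    (hU₂meas : ∀ s t, Measurable (U₂ s t))
    (hU₂nonneg : ∀ s t, s ≤ t → ∀ ω, 0 ≤ U₂ s t ω)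
    -- U₁ is MGF-bounded for pθ, U₂ is MGF-bounded for qθ
    (hU₁bound : ∀ s t, s ≤ t →
      ∫⁻ ω, ENNReal.ofReal (Real.exp (-(p * θ) * U₁ s t ω)) ∂P
        ≤ ENNReal.ofReal (Real.exp (p * θ * ρ₁ * ((t : ℝ) - (s : ℝ)) + p * θ * σ₁)))
    (hU₂bound : ∀ s t, s ≤ t →
      ∫⁻ ω, ENNReal.ofReal (Real.exp (-(q * θ) * U₂ s t ω)) ∂P
        ≤ ENNReal.ofReal (Real.exp (q * θ * ρ₂ * ((t : ℝ) - (s : ℝ)) + q * θ * σ₂)))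
    -- the rates differ
    (hne : ρ₁ ≠ ρ₂) :
    ∀ s t, s ≤ t →
      ∫⁻ ω, ENNReal.ofReal
          (Real.exp (-θ * sInf ((fun r => U₁ s r ω + U₂ r t ω) '' Set.Icc s t))) ∂P
        ≤ ENNReal.ofReal (Real.exp (θ * max ρ₁ ρ₂ * ((t : ℝ) - (s : ℝ))
            + θ * (σ₁ + σ₂ - 1 / θ * Real.log (1 - Real.exp (-θ * |ρ₁ - ρ₂|))))) :=
  convolution_dependent_general hθ (Real.holderConjugate_iff.mpr ⟨hp, by simpa using hpq⟩)
    (fun s t _ => (hU₁meas s t).aemeasurable) (fun s t _ => (hU₂meas s t).aemeasurable)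
    hU₁bound hU₂bound hne
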